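/- If machine costs are powers of 2 and some type is less cost-efficient per job than the next smaller type, that type is never needed: suppose c_k = 2^k for all k, capacities B_k are strictly increasing, and for some fixed k one has 2^k/B_k < 2^{k+1}/B_{k+1} (equivalently B_{k+1} < 2·B_k). Then for every valid schedule S of an instance J there is a valid schedule S′ of J with cost(S′) ≤ cost(S) that contains no batch of type k+1. -/

import Mathlib

structure SchedInstance where
  jobs : Finset ℕ
  r : ℕ → ℤ
  d : ℕ → ℤ
  window : ∀ j ∈ jobs, r j ≤ d j

structure Batch where
  btype : ℕ
  time : ℤ
  bjobs : Finset ℕ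
deriving DecidableEq

def ValidSchedule (B : ℕ → ℕ) (P : SchedInstance) (S : Finset Batch) : Prop :=
  (∀ X ∈ S, X.bjobs.card ≤ B X.btype) ∧
  (∀ X ∈ S, ∀ j ∈ X.bjobs, j ∈ P.jobs ∧ P.r j ≤ X.time ∧ X.time ≤ P.d j) ∧
  (∀ X ∈ S, ∀ Y ∈ S, X ≠ Y → Disjoint X.bjobs Y.bjobs) ∧
  (∀ j ∈ P.jobs, ∃ X ∈ S, j ∈ X.bjobs)

noncomputable def schedCost (c : ℕ → ℝ) (S : Finset Batch) : ℝ :=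
  ∑ X ∈ S, c X.btype

/-!
A batch of type `t` holds at most `B t ≤ m * B s` jobs, so its jobs fit into `m` batches of type `s`
run at the same time, and these cost no more as soon as `m * c s ≤ c t`. Doing this for all batches
of type `t` removes that type from a schedule. For costs `2 ^ k` and `m = 2`, `s = k`, `t = k + 1`,
the first inequality follows from inefficiency and the second is `2 * 2 ^ k = 2 ^ (k + 1)`.
-/

theorem exists_finpartition_card_parts_le {α : Type*} [DecidableEq α] {m b : ℕ} {s : Finset α}
    (h : s.card ≤ m * b) :
    ∃ Q : Finpartition s, Q.parts.card ≤ m ∧ ∀ A ∈ Q.parts, A.card ≤ b := by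
  induction m generalizing s with
  | zero =>
    obtain rfl : s = ∅ := by simpa using h
    exact ⟨Finpartition.empty _, by simp⟩
  | succ m ih =>
    obtain rfl | hs := s.eq_empty_or_nonempty
    · exact ⟨Finpartition.empty _, by simp⟩
    obtain ⟨A, hAs, hA⟩ := Finset.exists_subset_card_eq (Nat.min_le_right b s.card)
    have hb : 0 < b := Nat.pos_of_mul_pos_left (hs.card_pos.trans_le h)
    have hA_nonempty : A.Nonempty := Finset.card_pos.1 (hA ▸ lt_min hb hs.card_pos)
    have hrest : (s \ A).card ≤ m * b := by
      rw [Finset.card_sdiff_of_subset hAs]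
      lia
    obtain ⟨Q, hQm, hQb⟩ := ih hrest
    refine ⟨Q.extend hA_nonempty.ne_empty Finset.sdiff_disjoint
      (Finset.sdiff_union_of_subset hAs), ?_, ?_⟩
    · rw [Finpartition.card_extend]
      lia
    · exact (Finset.forall_mem_insert _ _ _).2 ⟨hA.trans_le (min_le_left _ _), hQb⟩

theorem lt_mul_of_div_lt_mul_div {K : Type*} [Field K] [LinearOrder K] [IsStrictOrderedRing K]
    {a b b' m : K} (ha : 0 < a) (hb : 0 < b) (hb' : 0 < b') (h : a / b < m * a / b') :
    b' < m * b := by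
  rw [div_lt_div_iff₀ hb hb', mul_right_comm, mul_comm a] at h
  exact lt_of_mul_lt_mul_right h ha.le

/-- The batches of type `s` that run at the time of `X` and serve one part of the partition `Q` of
the jobs of `X` each. Parts of a `Finpartition` are nonempty, so an empty batch is split into no
batches. -/
def Batch.split (X : Batch) (s : ℕ) (Q : Finpartition X.bjobs) : Finset Batch :=
  Q.parts.image (Batch.mk s X.time)

theorem Batch.mem_split {X Y : Batch} {s : ℕ} {Q : Finpartition X.bjobs} :
    Y ∈ X.split s Q ↔ Y.btype = s ∧ Y.time = X.time ∧ Y.bjobs ∈ Q.parts := by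
  constructor
  · intro hY
    obtain ⟨A, hA, rfl⟩ := Finset.mem_image.1 hY
    exact ⟨rfl, rfl, hA⟩
  · rintro ⟨rfl, hYX, hY⟩
    exact Finset.mem_image.2 ⟨Y.bjobs, hY, by rw [← hYX]⟩

theorem Batch.schedCost_split (c : ℕ → ℝ) (X : Batch) (s : ℕ) (Q : Finpartition X.bjobs) :
    schedCost c (X.split s Q) = Q.parts.card * c s := by
  have hinj : Function.Injective (Batch.mk s X.time) := fun A A' h => congrArg Batch.bjobs h
  simp only [schedCost, split, Finset.sum_image hinj.injOn, Finset.sum_const, nsmul_eq_mul]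

/-- The schedule obtained from `S` by splitting every batch `X` along `Q X` into batches of type
`s X`. -/
def splitSchedule (S : Finset Batch) (s : Batch → ℕ) (Q : ∀ X : Batch, Finpartition X.bjobs) :
    Finset Batch :=
  S.biUnion fun X => X.split (s X) (Q X)

theorem mem_splitSchedule {S : Finset Batch} {s : Batch → ℕ}
    {Q : ∀ X : Batch, Finpartition X.bjobs} {Y : Batch} :
    Y ∈ splitSchedule S s Q ↔
      ∃ X ∈ S, Y.btype = s X ∧ Y.time = X.time ∧ Y.bjobs ∈ (Q X).parts := by
  simp only [splitSchedule, Finset.mem_biUnion, Batch.mem_split]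

namespace ValidSchedule

variable {B : ℕ → ℕ} {P : SchedInstance} {S : Finset Batch} {s : Batch → ℕ}
  {Q : ∀ X : Batch, Finpartition X.bjobs}

protected theorem splitSchedule (hS : ValidSchedule B P S)
    (hQ : ∀ X ∈ S, ∀ A ∈ (Q X).parts, A.card ≤ B (s X)) :
    ValidSchedule B P (splitSchedule S s Q) := by
  obtain ⟨-, hwindow, hdisj, hcover⟩ := hS
  simp only [ValidSchedule, mem_splitSchedule]
  refine ⟨?_, ?_, ?_, ?_⟩
  · rintro Y ⟨X, hX, hs, -, hY⟩
    exact hs ▸ hQ X hX _ hY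
  · rintro Y ⟨X, hX, -, htime, hY⟩ j hj
    exact htime ▸ hwindow X hX j ((Q X).subset hY hj)
  · rintro Y ⟨X, hX, hs, htime, hY⟩ Y' ⟨X', hX', hs', htime', hY'⟩ hne
    obtain rfl | hXX' := eq_or_ne X X'
    · have hjobs : Y.bjobs ≠ Y'.bjobs := fun h => hne <| by
        cases Y
        cases Y'
        simp_all only
      exact (Q X).disjoint hY hY' hjobs
    · exact (hdisj X hX X' hX' hXX').mono ((Q X).subset hY) ((Q X').subset hY')
  · intro j hj
    obtain ⟨X, hX, hjX⟩ := hcover j hj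
    obtain ⟨A, hA, hjA⟩ := (Q X).exists_mem hjX
    exact ⟨⟨s X, X.time, A⟩, ⟨X, hX, rfl, rfl, hA⟩, hjA⟩

theorem pairwiseDisjoint_split (hS : ValidSchedule B P S) :
    (S : Set Batch).PairwiseDisjoint fun X => X.split (s X) (Q X) := by
  intro X hX X' hX' hne
  refine Finset.disjoint_left.2 fun Y hY hY' => ?_
  obtain ⟨-, -, hYX⟩ := Batch.mem_split.1 hY
  obtain ⟨-, -, hYX'⟩ := Batch.mem_split.1 hY'
  have hdisj : Disjoint X.bjobs X'.bjobs := hS.2.2.1 X hX X' hX' hne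
  obtain ⟨j, hj⟩ := (Q X).nonempty_of_mem_parts hYX
  exact Finset.disjoint_left.1 hdisj ((Q X).subset hYX hj) ((Q X').subset hYX' hj)

theorem schedCost_splitSchedule (hS : ValidSchedule B P S) (c : ℕ → ℝ) :
    schedCost c (splitSchedule S s Q) = ∑ X ∈ S, (Q X).parts.card * c (s X) :=
  (Finset.sum_biUnion hS.pairwiseDisjoint_split).trans
    (Finset.sum_congr rfl fun X _ => Batch.schedCost_split c X (s X) (Q X))

end ValidSchedule

theorem exists_finpartition_avoiding_type {B : ℕ → ℕ} {c : ℕ → ℝ} (hc : ∀ i, 0 ≤ c i)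
    {s t m : ℕ} (hst : s ≠ t) (hcap : B t ≤ m * B s) (hcost : m * c s ≤ c t)
    {X : Batch} (hX : X.bjobs.card ≤ B X.btype) :
    ∃ s' ≠ t, ∃ Q : Finpartition X.bjobs,
      (∀ A ∈ Q.parts, A.card ≤ B s') ∧ Q.parts.card * c s' ≤ c X.btype := by
  obtain rfl | hXt := eq_or_ne X.btype t
  · obtain ⟨Q, hQm, hQb⟩ := exists_finpartition_card_parts_le (hX.trans hcap)
    refine ⟨s, hst, Q, hQb, le_trans ?_ hcost⟩
    gcongr
    exact hc s
  · have htop := Finpartition.parts_top_subset X.bjobs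
    refine ⟨X.btype, hXt, ⊤, fun A hA => ?_, ?_⟩
    · rwa [Finset.mem_singleton.1 (htop hA)]
    · have hcard : ((⊤ : Finpartition X.bjobs).parts.card : ℝ) ≤ 1 :=
        mod_cast Finset.card_le_card htop
      exact mul_le_of_le_one_left (hc _) hcard

theorem inefficient_type_never_needed_general {B : ℕ → ℕ} {c : ℕ → ℝ} (hc : ∀ i, 0 ≤ c i)
    {s t m : ℕ} (hst : s ≠ t) (hcap : B t ≤ m * B s) (hcost : m * c s ≤ c t)
    {P : SchedInstance} {S : Finset Batch} (hS : ValidSchedule B P S) :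
    ∃ S' : Finset Batch, ValidSchedule B P S' ∧ schedCost c S' ≤ schedCost c S ∧
      ∀ X ∈ S', X.btype ≠ t := by
  choose! s' hne Q hQB hQcost using fun X hX =>
    exists_finpartition_avoiding_type hc hst hcap hcost (hS.1 X hX)
  refine ⟨splitSchedule S s' Q, hS.splitSchedule hQB, ?_, fun Y hY => ?_⟩
  · rw [hS.schedCost_splitSchedule]
    exact Finset.sum_le_sum hQcost
  · obtain ⟨X, hX, hYs', -⟩ := mem_splitSchedule.1 hY
    exact hYs' ▸ hne X hX

/-- with costs `c k = 2 ^ k` and strictly increasing capacities, if type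
`k+1` is strictly less cost-efficient per job than type `k`
(`2^k / B k < 2^(k+1) / B (k+1)`), then any valid schedule can be replaced by one of
no larger cost that uses no batch of type `k + 1`. -/
theorem inefficient_type_never_needed
    (B : ℕ → ℕ) (hB1 : ∀ k', 1 ≤ B k') (hBmono : StrictMono B)
    (k : ℕ)
    (hineff : (2 : ℚ) ^ k / (B k : ℚ) < (2 : ℚ) ^ (k + 1) / (B (k + 1) : ℚ))
    (P : SchedInstance) (S : Finset Batch) (hS : ValidSchedule B P S) :
    ∃ S' : Finset Batch, ValidSchedule B P S' ∧
      schedCost (fun k' => (2 : ℝ) ^ k') S' ≤ schedCost (fun k' => (2 : ℝ) ^ k') S ∧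
      ∀ X ∈ S', X.btype ≠ k + 1 := by
  have hcap : (B (k + 1) : ℚ) < (2 : ℕ) * B k := lt_mul_of_div_lt_mul_div (pow_pos two_pos k)
    (mod_cast hB1 k) (mod_cast hB1 (k + 1)) (pow_succ' (2 : ℚ) k ▸ hineff)
  exact inefficient_type_never_needed_general (fun i => by positivity) k.succ_ne_self.symm
    (mod_cast hcap.le) (pow_succ' (2 : ℝ) k).ge hS
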